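/- The family (r_g)_{g good}, where r_g = Ξ([g]), is a ℚ(q)-basis of 𝒰 (the Lyndon basis). -/

import Mathlib

open scoped BigOperators

noncomputable section

/-- The field `ℚ(q)` of rational functions over `ℚ`. -/
abbrev K : Type := RatFunc ℚ

/-- The indeterminate `q`. -/
abbrev qq : K := RatFunc.X

/-- Words on the alphabet `{w_1, …, w_r}` (the free monoid `M`). -/
abbrev Word (r : ℕ) := List (Fin r)

/-- The space `F` with basis the words, as finitely supported families of coefficients. -/
abbrev FA (r : ℕ) := Word r →₀ K

variable {r : ℕ}

/-- `(|w|, |x|)` : the symmetric bilinear form evaluated on the degrees of two words,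
where `p i j = (α_i, α_j)` is the form on simple roots. -/
def pairW (p : Fin r → Fin r → ℤ) (w x : Word r) : ℤ :=
  (w.map fun i => (x.map fun j => p i j).sum).sum

/-- Auxiliary q-shuffle on *reversed* words:
`shAux p w x` is the q-shuffle of `w.reverse` and `x.reverse`; it implements the recursion
`(w·a) * (x·b) = (w * (x·b))·a + q^{-(|w·a|,|b|)} ((w·a) * x)·b`, `w[] * x = x * w[] = x`. -/
def shAux (p : Fin r → Fin r → ℤ) : Word r → Word r → FA r
  | [], x => Finsupp.single x.reverse 1
  | w, [] => Finsupp.single w.reverse 1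
  | a :: w, b :: x =>
      Finsupp.mapDomain (fun u => u ++ [a]) (shAux p w (b :: x))
      + (qq ^ (-(pairW p (a :: w) [b]))) •
          Finsupp.mapDomain (fun u => u ++ [b]) (shAux p (a :: w) x)
  termination_by w x => w.length + x.length
  decreasing_by all_goals (first | (simp only [List.length_cons]; omega) | omega)

/-- The q-shuffle product `*` on `F`, extended bilinearly from words. -/
def shuffle (p : Fin r → Fin r → ℤ) (f g : FA r) : FA r :=
  f.sum fun w c => g.sum fun x d => (c * d) • shAux p w.reverse x.reverse

/-- Membership in `𝒰`, the `ℚ(q)`-subalgebra of `(F, *)` generated by the letters `w_i`. -/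
inductive InU (p : Fin r → Fin r → ℤ) : FA r → Prop
  | letter (i : Fin r) : InU p (Finsupp.single [i] 1)
  | one : InU p (Finsupp.single ([] : Word r) 1)
  | add : ∀ {f g : FA r}, InU p f → InU p g → InU p (f + g)
  | smul : ∀ (c : K) {f : FA r}, InU p f → InU p (c • f)
  | mul : ∀ {f g : FA r}, InU p f → InU p g → InU p (shuffle p f g)

/-- The degree of a word in `Q⁺`, recorded as the multiplicity of each simple root. -/
def deg (w : Word r) : Fin r → ℕ := fun i => w.count i

/-- `f` is homogeneous of degree `ν`. -/
def Homog (f : FA r) (ν : Fin r → ℕ) : Prop := ∀ w ∈ f.support, deg w = ν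

/-- Lexicographic order on words (a proper left factor is smaller than the word). -/
def wlt (w x : Word r) : Prop := List.Lex (· < ·) w x

def wle (w x : Word r) : Prop := wlt w x ∨ w = x

/-- `g` is the lexicographically largest word occurring (with nonzero coefficient) in `f`. -/
def IsMaxWord (f : FA r) (g : Word r) : Prop :=
  f g ≠ 0 ∧ ∀ w ∈ f.support, wle w g

/-- Good words: words of the form `max(u)` for a nonzero homogeneous `u ∈ 𝒰`. -/
def IsGood (p : Fin r → Fin r → ℤ) (g : Word r) : Prop :=
  ∃ u : FA r, InU p u ∧ (∃ ν, Homog u ν) ∧ IsMaxWord u g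

/-- Lyndon words: nonempty words smaller than all their proper nonempty right factors. -/
def IsLyndon (l : Word r) : Prop :=
  l ≠ [] ∧ ∀ u v : Word r, l = u ++ v → u ≠ [] → v ≠ [] → wlt l v

/-- The concatenation product on `F`. -/
def cmul (f g : FA r) : FA r :=
  f.sum fun w c => g.sum fun x d => Finsupp.single (w ++ x) (c * d)

open scoped Classical in
/-- Length of the longest proper nonempty left factor of `l` which is a Lyndon word. -/
def costdLen (l : Word r) : ℕ :=
  Nat.findGreatest (fun k => 0 < k ∧ k < l.length ∧ IsLyndon (l.take k)) (l.length - 1)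

/-- The iterated q-bracketing `[l]` of a word: `[l] = l` for a letter, and
`[l] = [[l₁],[l₂]]_q = [l₁][l₂] − q^{(|l₁|,|l₂|)}[l₂][l₁]` for the co-standard
factorization `l = l₁ l₂`. -/
def bracket (p : Fin r → Fin r → ℤ) (l : Word r) : FA r :=
  if l.length ≤ 1 then Finsupp.single l 1
  else if hk : 0 < costdLen l ∧ costdLen l < l.length then
    cmul (bracket p (l.take (costdLen l))) (bracket p (l.drop (costdLen l)))
      - qq ^ (pairW p (l.take (costdLen l)) (l.drop (costdLen l))) •
          cmul (bracket p (l.drop (costdLen l))) (bracket p (l.take (costdLen l)))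
  else Finsupp.single l 1
  termination_by l.length
  decreasing_by
    all_goals (first | (simp only [List.length_take, List.length_drop]; omega) | omega)

/-- `[w] = [l₁][l₂]⋯[l_k]` : the concatenation product of the brackets of a list of words. -/
def cprod (p : Fin r → Fin r → ℤ) (ls : List (Word r)) : FA r :=
  (ls.map (bracket p)).foldr cmul (Finsupp.single ([] : Word r) 1)

/-- `Ξ` on a word: the q-shuffle product of its letters. -/
def xiWord (p : Fin r → Fin r → ℤ) : Word r → FA r
  | [] => Finsupp.single ([] : Word r) 1
  | i :: w => shuffle p (Finsupp.single [i] 1) (xiWord p w)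

/-- The linear map `Ξ : (F, concatenation) → (F, *)`, `Ξ(w_{i₁}⋯w_{i_k}) = w_{i₁} * ⋯ * w_{i_k}`. -/
def xi (p : Fin r → Fin r → ℤ) (f : FA r) : FA r :=
  f.sum fun w c => c • xiWord p w

/-- The data of the Cartan matrix `[a_{ij}]` of a finite-dimensional complex simple
Lie algebra of rank `r`: an integral matrix with `2` on the diagonal and nonpositive
off-diagonal entries, symmetrizable by `d_i ∈ {1,2,3}`, whose symmetrization
`(α_i, α_j) = d_i a_{ij}` is positive definite, and which is indecomposable. -/
structure CartanData (r : ℕ) where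
  a : Fin r → Fin r → ℤ
  d : Fin r → ℤ
  diag : ∀ i, a i i = 2
  offdiag : ∀ i j, i ≠ j → a i j ≤ 0
  dval : ∀ i, d i = 1 ∨ d i = 2 ∨ d i = 3
  dsymm : ∀ i j, d i * a i j = d j * a j i
  posdef : ∀ v : Fin r → ℚ, v ≠ 0 → 0 < ∑ i, ∑ j, v i * v j * ((d i * a i j : ℤ) : ℚ)
  indec : ∀ s : Finset (Fin r), s.Nonempty → s ≠ Finset.univ →
    ∃ i ∈ s, ∃ j, j ∉ s ∧ a i j ≠ 0

/-- The symmetric bilinear form `(α_i, α_j) = d_i a_{ij}` on simple roots. -/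
def CartanData.p (C : CartanData r) : Fin r → Fin r → ℤ := fun i j => C.d i * C.a i j

section Helpers

/-! ### Shuffle and `Ξ` as linear maps -/

/-- Appending a letter. -/
def Rr (a : Fin r) : FA r →ₗ[K] FA r := Finsupp.lmapDomain K K (fun u => u ++ [a])

/-- Prepending a letter. -/
def Pp (a : Fin r) : FA r →ₗ[K] FA r := Finsupp.lmapDomain K K (fun u => a :: u)

/-- Bilinear shuffle. -/
def shL (p : Fin r → Fin r → ℤ) : FA r →ₗ[K] FA r →ₗ[K] FA r :=
  Finsupp.linearCombination K
    (fun w => Finsupp.linearCombination K (fun x => shAux p w.reverse x.reverse))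

/-- Linear `Ξ`. -/
def xiL (p : Fin r → Fin r → ℤ) : FA r →ₗ[K] FA r := Finsupp.linearCombination K (xiWord p)

theorem Rr_single (a : Fin r) (w : Word r) (c : K) :
    Rr a (Finsupp.single w c) = Finsupp.single (w ++ [a]) c := by
  simp [Rr]

theorem Pp_single (a : Fin r) (w : Word r) (c : K) :
    Pp a (Finsupp.single w c) = Finsupp.single (a :: w) c := by
  simp [Pp]

theorem shL_single (p : Fin r → Fin r → ℤ) (w x : Word r) :
    shL p (Finsupp.single w 1) (Finsupp.single x 1) = shAux p w.reverse x.reverse := by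
  simp [shL]

theorem shuffle_eq (p : Fin r → Fin r → ℤ) (f g : FA r) : shuffle p f g = shL p f g := by
  simp only [shuffle, shL, Finsupp.linearCombination_apply, Finsupp.sum,
    LinearMap.sum_apply, LinearMap.smul_apply, Finset.smul_sum, smul_smul]

theorem xi_eq (p : Fin r → Fin r → ℤ) (f : FA r) : xi p f = xiL p f := by
  simp only [xi, xiL, Finsupp.linearCombination_apply]

theorem shAux_nil_left (p : Fin r → Fin r → ℤ) (x : Word r) :
    shAux p [] x = Finsupp.single x.reverse 1 := by
  rw [shAux]

theorem shAux_nil_right (p : Fin r → Fin r → ℤ) (x : Word r) :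
    shAux p x [] = Finsupp.single x.reverse 1 := by
  cases x <;> simp [shAux]

theorem shAux_cons (p : Fin r → Fin r → ℤ) (a b : Fin r) (w x : Word r) :
    shAux p (a :: w) (b :: x) = Rr a (shAux p w (b :: x))
      + (qq ^ (-(pairW p (a :: w) [b]))) • Rr b (shAux p (a :: w) x) := by
  rw [shAux]; rfl

theorem pairW_perm_left (p : Fin r → Fin r → ℤ) {w w' : Word r} (h : w.Perm w') (x : Word r) :
    pairW p w x = pairW p w' x := by
  unfold pairW
  exact (h.map _).sum_eq

theorem pairW_perm_right (p : Fin r → Fin r → ℤ) {x x' : Word r} (h : x.Perm x') (w : Word r) :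
    pairW p w x = pairW p w x' := by
  unfold pairW
  congr 1
  apply List.map_congr_left
  intro i _
  exact (h.map _).sum_eq

theorem pairW_cons_left (p : Fin r → Fin r → ℤ) (a : Fin r) (w x : Word r) :
    pairW p (a :: w) x = pairW p [a] x + pairW p w x := by
  simp [pairW]

theorem pairW_cons_right (p : Fin r → Fin r → ℤ) (a b : Fin r) (x : Word r) :
    pairW p [a] (b :: x) = p a b + pairW p [a] x := by
  simp [pairW]

theorem pairW_ss (p : Fin r → Fin r → ℤ) (a b : Fin r) : pairW p [a] [b] = p a b := by
  simp [pairW]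

theorem pairW_symm_letter (p : Fin r → Fin r → ℤ) (hp : ∀ i j, p i j = p j i) (a : Fin r)
    (w : Word r) : pairW p [a] w = pairW p w [a] := by
  simp [pairW, hp a]

theorem qq_ne : (qq : K) ≠ 0 := RatFunc.X_ne_zero

theorem shAux_perm (p : Fin r → Fin r → ℤ) : ∀ (w x : Word r) (u : Word r),
    u ∈ (shAux p w x).support → u.Perm (w ++ x) := by
  have key : ∀ (n : ℕ) (w x : Word r), w.length + x.length = n →
      shAux p w x ∈ Finsupp.supported K K {u : Word r | u.Perm (w ++ x)} := by
    intro n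
    induction n with
    | zero =>
      intro w x h
      have hw : w = [] := List.length_eq_zero_iff.mp (by omega)
      have hx : x = [] := List.length_eq_zero_iff.mp (by omega)
      subst hw hx
      rw [shAux_nil_left]
      apply Finsupp.single_mem_supported
      simp
    | succ n ih =>
      intro w x h
      rcases w with _ | ⟨a, w⟩
      · rw [shAux_nil_left]
        apply Finsupp.single_mem_supported
        simpa using List.reverse_perm x
      rcases x with _ | ⟨b, x⟩
      · rw [shAux_nil_right]
        apply Finsupp.single_mem_supported
        simpa using List.reverse_perm (a :: w)
      rw [shAux_cons]
      have hR : ∀ (c : Fin r) (f : FA r) (s t : Set (Word r)),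
          f ∈ Finsupp.supported K K s → (∀ u ∈ s, u ++ [c] ∈ t) →
          Rr c f ∈ Finsupp.supported K K t := by
        intro c f s t hf hst
        have := Finsupp.lmapDomain_supported (M := K) (R := K) (fun u : Word r => u ++ [c]) s
        have h2 : Rr c f ∈ (Finsupp.supported K K s).map
            (Finsupp.lmapDomain K K (fun u : Word r => u ++ [c])) :=
          Submodule.mem_map_of_mem hf
        rw [this] at h2
        refine Finsupp.supported_mono ?_ h2
        rintro _ ⟨u, hu, rfl⟩
        exact hst u hu
      refine Submodule.add_mem _ ?_ (Submodule.smul_mem _ _ ?_)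
      · refine hR a _ _ _ (ih w (b :: x) (by simp at h ⊢; omega)) ?_
        intro u hu
        have hu' : u.Perm (w ++ b :: x) := hu
        exact (List.perm_append_singleton a u).trans (hu'.cons a)
      · refine hR b _ _ _ (ih (a :: w) x (by simp at h ⊢; omega)) ?_
        intro u hu
        have hu' : u.Perm (a :: w ++ x) := hu
        exact ((List.perm_append_singleton b u).trans (hu'.cons b)).trans
          List.perm_middle.symm
  intro w x u hu
  exact (Finsupp.mem_supported K _).mp (key _ w x rfl) hu

/-- Left shuffle by a letter. -/
def LL (p : Fin r → Fin r → ℤ) (i : Fin r) : FA r →ₗ[K] FA r := shL p (Finsupp.single [i] 1)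

theorem LL_single (p : Fin r → Fin r → ℤ) (i : Fin r) (x : Word r) :
    LL p i (Finsupp.single x 1) = shAux p [i] x.reverse := by
  simp [LL, shL_single]

theorem LL_Rr (p : Fin r → Fin r → ℤ) (i b : Fin r) (f : FA r) :
    LL p i (Rr b f) = Rr i (Rr b f) + qq ^ (-(p i b)) • Rr b (LL p i f) := by
  have : (LL p i).comp (Rr b) = (Rr i).comp (Rr b) + qq ^ (-(p i b)) • (Rr b).comp (LL p i) := by
    apply Finsupp.lhom_ext'
    intro w
    apply LinearMap.ext_ring
    simp only [LinearMap.comp_apply, Finsupp.lsingle_apply, LinearMap.add_apply,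
      LinearMap.smul_apply, Rr_single, LL_single]
    rw [List.reverse_append, List.reverse_singleton, List.singleton_append, shAux_cons,
      shAux_nil_left, Rr_single, pairW_ss]
    simp
  exact LinearMap.congr_fun this f

theorem linear_eq_on_support {V : Type*} [AddCommGroup V] [Module K V] (A B : FA r →ₗ[K] V)
    (f : FA r) (h : ∀ u ∈ f.support, A (Finsupp.single u 1) = B (Finsupp.single u 1)) :
    A f = B f := by
  have : f = ∑ u ∈ f.support, f u • Finsupp.single u (1 : K) := by
    conv_lhs => rw [← Finsupp.sum_single f]
    simp [Finsupp.sum]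
  rw [this, map_sum, map_sum]
  refine Finset.sum_congr rfl fun u hu => ?_
  rw [map_smul, map_smul, h u hu]

/-- Recursion of the shuffle for a homogeneous left factor. -/
theorem shL_Rr (p : Fin r → Fin r → ℤ) (a b : Fin r) (f : FA r) (v x : Word r)
    (hf : ∀ u ∈ f.support, u.Perm v) :
    shL p (Rr a f) (Finsupp.single (x ++ [b]) 1) =
      Rr a (shL p f (Finsupp.single (x ++ [b]) 1))
      + qq ^ (-(pairW p (a :: v) [b])) • Rr b (shL p (Rr a f) (Finsupp.single x 1)) := by
  have := linear_eq_on_support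
    (((shL p).flip (Finsupp.single (x ++ [b]) 1)).comp (Rr a))
    ((Rr a).comp ((shL p).flip (Finsupp.single (x ++ [b]) 1))
      + qq ^ (-(pairW p (a :: v) [b])) •
        (Rr b).comp (((shL p).flip (Finsupp.single x 1)).comp (Rr a))) f ?_
  · simpa using this
  intro u hu
  simp only [LinearMap.comp_apply, LinearMap.add_apply, LinearMap.smul_apply,
    LinearMap.flip_apply, Rr_single, shL_single]
  simp only [List.reverse_append, List.reverse_singleton, List.singleton_append]
  rw [shAux_cons, pairW_perm_left p (((List.reverse_perm u).trans (hf u hu)).cons a)]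

theorem LL_assoc_word (p : Fin r → Fin r → ℤ) (i : Fin r) : ∀ (n : ℕ) (w x : Word r),
    w.length + x.length = n →
    LL p i (shL p (Finsupp.single w 1) (Finsupp.single x 1)) =
      shL p (LL p i (Finsupp.single w 1)) (Finsupp.single x 1) := by
  have hone : ∀ f : FA r, shL p f (Finsupp.single [] 1) = f := by
    intro f
    have := linear_eq_on_support ((shL p).flip (Finsupp.single [] 1)) LinearMap.id f ?_
    · simpa using this
    intro u _
    simp [shL_single, shAux_nil_right]
  have hone' : ∀ x : Word r, shL p (Finsupp.single [] 1) (Finsupp.single x 1)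
      = Finsupp.single x 1 := by
    intro x
    simp [shL_single, shAux_nil_left]
  intro n
  induction n using Nat.strong_induction_on with
  | _ n ih =>
  intro w x hn
  rcases List.eq_nil_or_concat x with rfl | ⟨x, b, rfl⟩
  · rw [hone, hone]
  rcases List.eq_nil_or_concat w with rfl | ⟨w, a, rfl⟩
  · rw [hone']
    have : LL p i (Finsupp.single [] 1) = Finsupp.single [i] 1 := by
      simp [LL_single, shAux_nil_right]
    rw [this]; rfl
  simp only [List.concat_eq_append] at hn ⊢
  simp only [List.length_append, List.length_singleton] at hn
  have ih1 := ih (w.length + (x.length + 1)) (by omega) w (x ++ [b]) (by simp)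
  have ih2 := ih (w.length + 1 + x.length) (by omega) (w ++ [a]) x (by simp)
  have hw : ∀ u ∈ (Finsupp.single w (1 : K)).support, u.Perm w := by
    intro u hu
    have := Finsupp.support_single_subset hu
    rw [Finset.mem_singleton] at this
    rw [this]
  have hwa : ∀ u ∈ (Finsupp.single (w ++ [a]) (1 : K)).support, u.Perm (a :: w) := by
    intro u hu
    have := Finsupp.support_single_subset hu
    rw [Finset.mem_singleton] at this
    rw [this]
    exact List.perm_append_singleton a w
  have hLw : ∀ u ∈ (LL p i (Finsupp.single w (1 : K))).support, u.Perm (i :: w) := by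
    intro u hu
    rw [LL_single] at hu
    exact (shAux_perm p _ _ u hu).trans (by simpa using (List.reverse_perm w))
  have e1 := shL_Rr p a b _ w x hw
  have e2 := shL_Rr p i b _ (a :: w) x hwa
  have e3 := shL_Rr p a b _ (i :: w) x hLw
  rw [Rr_single] at e1
  have e4 := LL_Rr p i a (Finsupp.single w 1)
  rw [Rr_single] at e4
  rw [e4] at ih2
  rw [map_add, map_smul, LinearMap.add_apply, LinearMap.smul_apply] at ih2
  rw [e4, map_add, map_smul, LinearMap.add_apply, LinearMap.smul_apply, e2, e3, e1]
  rw [map_add, map_smul, LL_Rr, LL_Rr, ih1, ih2]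
  have p1 : pairW p (i :: a :: w) [b] = p i b + pairW p (a :: w) [b] := by
    rw [pairW_cons_left, pairW_ss]
  have p2 : pairW p (a :: i :: w) [b] = p i b + pairW p (a :: w) [b] := by
    rw [pairW_cons_left, pairW_cons_left p i, pairW_cons_left p a w, pairW_ss, pairW_ss]; ring
  rw [p1, p2, neg_add, zpow_add₀ qq_ne]
  simp only [map_add, map_smul, smul_add, smul_smul]
  generalize qq ^ (-(p i b)) = A
  generalize qq ^ (-(pairW p (a :: w) [b])) = B
  generalize qq ^ (-(p i a)) = D
  rw [show D * (A * B) = B * (A * D) by ring, mul_comm A B, ← mul_assoc B A D]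
  abel

theorem LL_assoc (p : Fin r → Fin r → ℤ) (i : Fin r) (f g : FA r) :
    LL p i (shL p f g) = shL p (LL p i f) g := by
  have h1 : ∀ w : Word r, LL p i (shL p (Finsupp.single w 1) g)
      = shL p (LL p i (Finsupp.single w 1)) g := by
    intro w
    exact linear_eq_on_support ((LL p i).comp (shL p (Finsupp.single w 1)))
      (shL p (LL p i (Finsupp.single w 1))) g fun x _ => LL_assoc_word p i _ w x rfl
  have := linear_eq_on_support ((LL p i).comp ((shL p).flip g))
    (((shL p).flip g).comp (LL p i)) f fun w _ => by simpa using h1 w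
  simpa using this

theorem xiWord_cons (p : Fin r → Fin r → ℤ) (i : Fin r) (w : Word r) :
    xiWord p (i :: w) = LL p i (xiWord p w) := by
  rw [xiWord, shuffle_eq]; rfl

theorem xiL_single (p : Fin r → Fin r → ℤ) (w : Word r) :
    xiL p (Finsupp.single w 1) = xiWord p w := by
  simp [xiL]

theorem xiL_Pp (p : Fin r → Fin r → ℤ) (i : Fin r) (f : FA r) :
    xiL p (Pp i f) = LL p i (xiL p f) :=
  linear_eq_on_support ((xiL p).comp (Pp i)) ((LL p i).comp (xiL p)) f fun w _ => by
    simp [Pp_single, xiL_single, xiWord_cons]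

theorem xiWord_shuffle (p : Fin r → Fin r → ℤ) (w x : Word r) :
    shL p (xiWord p w) (xiWord p x) = xiWord p (w ++ x) := by
  induction w with
  | nil =>
    have := linear_eq_on_support (shL p (Finsupp.single [] 1)) LinearMap.id (xiWord p x) (by
      intro u _
      simp [shL_single, shAux_nil_left])
    simpa [xiWord] using this
  | cons i w ih =>
    rw [xiWord_cons, ← LL_assoc, ih, List.cons_append, xiWord_cons]

theorem inU_xiWord (p : Fin r → Fin r → ℤ) (w : Word r) : InU p (xiWord p w) := by
  induction w with
  | nil => exact InU.one
  | cons i w ih => exact InU.mul (InU.letter i) ih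

theorem inU_iff (p : Fin r → Fin r → ℤ) (f : FA r) :
    InU p f ↔ f ∈ Submodule.span K (Set.range (xiWord p)) := by
  constructor
  · intro h
    induction h with
    | letter i =>
      refine Submodule.subset_span ⟨[i], ?_⟩
      rw [xiWord_cons, xiWord, LL_single]
      simp [shAux_nil_right]
    | one => exact Submodule.subset_span ⟨[], rfl⟩
    | add _ _ h1 h2 => exact Submodule.add_mem _ h1 h2
    | smul c _ h => exact Submodule.smul_mem _ c h
    | mul _ _ h1 h2 =>
      rw [shuffle_eq]
      have := Submodule.apply_mem_map₂ (shL p) h1 h2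
      rw [Submodule.map₂_span_span] at this
      refine Submodule.span_mono ?_ this
      rintro _ ⟨_, ⟨w, rfl⟩, _, ⟨x, rfl⟩, rfl⟩
      exact ⟨w ++ x, (xiWord_shuffle p w x).symm⟩
  · intro h
    induction h using Submodule.span_induction with
    | mem x hx => obtain ⟨w, rfl⟩ := hx; exact inU_xiWord p w
    | zero => simpa using InU.smul (0 : K) (InU.one (p := p))
    | add x y _ _ h1 h2 => exact InU.add h1 h2
    | smul c x _ h => exact InU.smul c h

theorem inU_iff' (p : Fin r → Fin r → ℤ) (f : FA r) :
    InU p f ↔ ∃ g, xiL p g = f := by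
  rw [inU_iff, xiL, ← Finsupp.range_linearCombination, LinearMap.mem_range]

/-! ### Symmetry of `Ξ` -/

/-- Transpose of left shuffling by a letter. -/
def Ee (p : Fin r → Fin r → ℤ) (j : Fin r) : Word r → FA r
  | [] => 0
  | i :: w => (if i = j then qq ^ (-(pairW p [j] w)) • Finsupp.single w 1 else 0)
      + Pp i (Ee p j w)

/-- Pairing with `f`. -/
def dotf (f : FA r) : FA r →ₗ[K] K := Finsupp.linearCombination K (fun y => f y)

theorem dotf_single (f : FA r) (w : Word r) : dotf f (Finsupp.single w 1) = f w := by
  simp [dotf]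

theorem LL_cons_aux (p : Fin r → Fin r → ℤ) (j a : Fin r) (y : Word r) :
    shAux p [j] (y ++ [a]) =
      qq ^ (-(pairW p [j] (a :: y))) • Finsupp.single (j :: a :: y.reverse) 1
        + Pp a (shAux p [j] y) := by
  have hRP : ∀ (b : Fin r) (f : FA r), Rr b (Pp a f) = Pp a (Rr b f) := by
    intro b f
    exact linear_eq_on_support ((Rr b).comp (Pp a)) ((Pp a).comp (Rr b)) f fun w _ => by
      simp [Rr_single, Pp_single]
  induction y with
  | nil =>
    rw [List.nil_append, shAux_cons, shAux_nil_left, shAux_nil_right, Rr_single, Rr_single,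
      Pp_single]
    simp [add_comm]
  | cons b y ih =>
    rw [List.cons_append, shAux_cons, ih, shAux_cons, shAux_nil_left, shAux_nil_left]
    simp only [map_add, map_smul, Rr_single, Pp_single, hRP, smul_add, smul_smul]
    rw [← zpow_add₀ qq_ne, pairW_cons_right p j a y,
      pairW_cons_right p j a (b :: y), pairW_cons_right p j b y, pairW_ss]
    simp only [List.reverse_cons, List.reverse_append, List.append_assoc, List.cons_append,
      List.nil_append, List.reverse_nil]
    rw [show -p j b + -(p j a + pairW p [j] y) = -(p j a + (p j b + pairW p [j] y)) by ring]
    abel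

theorem LL_cons (p : Fin r → Fin r → ℤ) (j a : Fin r) (x : Word r) :
    LL p j (Finsupp.single (a :: x) 1) =
      qq ^ (-(pairW p [j] (a :: x))) • Finsupp.single (j :: a :: x) 1
        + Pp a (LL p j (Finsupp.single x 1)) := by
  rw [LL_single, LL_single, List.reverse_cons, LL_cons_aux, List.reverse_reverse,
    pairW_perm_right p ((List.reverse_perm x).cons a)]

theorem Pp_apply_cons (a i : Fin r) (f : FA r) (y : Word r) :
    Pp a f (i :: y) = if a = i then f y else 0 := by
  have hinj : Function.Injective (fun u : Word r => a :: u) := fun u v h => by simpa using h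
  split_ifs with h
  · subst h
    exact Finsupp.mapDomain_apply hinj f y
  · apply Finsupp.mapDomain_of_notMem_range
    rintro ⟨u, hu⟩
    simp at hu
    exact h hu.1

theorem Pp_apply_nil (a : Fin r) (f : FA r) : Pp a f [] = 0 := by
  apply Finsupp.mapDomain_of_notMem_range
  rintro ⟨u, hu⟩
  simp at hu

theorem LL_transpose_word (p : Fin r → Fin r → ℤ) (j : Fin r) : ∀ (x y : Word r),
    LL p j (Finsupp.single x 1) y = Ee p j y x := by
  intro x
  induction x with
  | nil =>
    intro y
    rw [LL_single, List.reverse_nil, shAux_nil_right]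
    cases y with
    | nil => simp [Ee]
    | cons i y =>
      rw [Ee, Finsupp.add_apply, Pp_apply_nil]
      rcases eq_or_ne i j with h | h
      · subst h
        cases y <;> simp [pairW]
      · have h' : j ≠ i := fun e => h e.symm
        simp [Finsupp.single_apply, h, h']
  | cons a x ih =>
    intro y
    rw [LL_cons]
    cases y with
    | nil => simp [Ee, Pp_apply_nil]
    | cons i y =>
      rw [Ee, Finsupp.add_apply, Finsupp.add_apply, Pp_apply_cons, Pp_apply_cons, ih]
      congr 1
      · rcases eq_or_ne i j with h | h
        · subst h
          rcases eq_or_ne y (a :: x) with h2 | h2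
          · subst h2; simp
          · have h2' : a :: x ≠ y := fun e => h2 e.symm
            simp [Finsupp.single_apply, h2, h2']
        · have h' : j ≠ i := fun e => h e.symm
          simp [Finsupp.single_apply, h, h']
      · simp only [eq_comm]

theorem LL_transpose (p : Fin r → Fin r → ℤ) (j : Fin r) (f : FA r) (y : Word r) :
    LL p j f y = dotf f (Ee p j y) := by
  have h1 : dotf f (Ee p j y) = dotf (Ee p j y) f := by
    simp only [dotf, Finsupp.linearCombination_apply, smul_eq_mul]
    rw [Finsupp.sum_of_support_subset _ (Finset.subset_union_left (s₂ := f.support)) _ (by simp),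
      Finsupp.sum_of_support_subset f (Finset.subset_union_right (s₁ := (Ee p j y).support)) _
        (by simp)]
    exact Finset.sum_congr rfl fun u _ => mul_comm _ _
  rw [h1]
  exact linear_eq_on_support ((Finsupp.lapply y).comp (LL p j)) (dotf (Ee p j y)) f fun w _ => by
    simp [dotf_single, LL_transpose_word]

theorem xiWord_perm (p : Fin r → Fin r → ℤ) (w x : Word r) (h : xiWord p w x ≠ 0) :
    x.Perm w := by
  induction w generalizing x with
  | nil =>
    rw [xiWord, Finsupp.single_apply] at h
    have : ([] : Word r) = x := by by_contra hh; simp [hh] at h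
    rw [← this]
  | cons i w ih =>
    rw [xiWord_cons] at h
    have hex : ∃ u ∈ (xiWord p w).support, LL p i (Finsupp.single u 1) x ≠ 0 := by
      by_contra hcon
      push Not at hcon
      apply h
      have := linear_eq_on_support ((Finsupp.lapply x).comp (LL p i)) 0 (xiWord p w)
        fun u hu => by simpa using hcon u hu
      simpa using this
    obtain ⟨u, hu, hx⟩ := hex
    rw [LL_single] at hx
    have h1 := shAux_perm p _ _ x (Finsupp.mem_support_iff.mpr hx)
    refine h1.trans ?_
    have h2 := ih u (Finsupp.mem_support_iff.mp hu)
    exact ((List.reverse_perm u).trans h2).cons i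

theorem xiWord_cons_apply (p : Fin r → Fin r → ℤ) (j : Fin r) (w : Word r) :
    ∀ x : Word r, xiWord p w (j :: x) = xiL p (Ee p j w) x := by
  induction w with
  | nil => intro x; simp [xiWord, Ee]
  | cons i w ih =>
    intro x
    rw [xiWord_cons, LL_transpose, Ee, Ee, map_add, map_add, Finsupp.add_apply, xiL_Pp,
      LL_transpose p i (xiL p (Ee p j w))]
    congr 1
    · rcases eq_or_ne i j with h | h
      · subst h
        simp only [if_true, map_smul, dotf_single, xiL_single, Finsupp.smul_apply]
        by_cases h0 : xiWord p w x = 0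
        · simp [h0]
        · rw [pairW_perm_right p (xiWord_perm p w x h0)]
      · simp [h, h.symm]
    · exact linear_eq_on_support ((dotf (xiWord p w)).comp (Pp j))
        (dotf (xiL p (Ee p j w))) _ fun y _ => by
          simp [Pp_single, dotf_single, ih]

theorem xiWord_symm (p : Fin r → Fin r → ℤ) (x : Word r) : ∀ w : Word r,
    xiWord p w x = xiWord p x w := by
  induction x with
  | nil =>
    intro w
    rcases eq_or_ne w [] with h | h
    · subst h; rfl
    · have h1 : xiWord p w [] = 0 := by
        by_contra hh
        exact h (List.nil_perm.mp (xiWord_perm p _ _ hh))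
      have h2 : xiWord p [] w = 0 := by
        by_contra hh
        exact h (List.perm_nil.mp (xiWord_perm p _ _ hh))
      rw [h1, h2]
  | cons j x ih =>
    intro w
    rw [xiWord_cons_apply, xiWord_cons, LL_transpose]
    exact linear_eq_on_support ((Finsupp.lapply x).comp (xiL p)) (dotf (xiWord p x)) _
      fun y _ => by simp [xiL_single, dotf_single, ih]

theorem dotf_xi (p : Fin r → Fin r → ℤ) (f : FA r) (x : Word r) :
    dotf f (xiWord p x) = xiL p f x := by
  have h1 : dotf f (xiWord p x) = dotf (xiWord p x) f := by
    simp only [dotf, Finsupp.linearCombination_apply, smul_eq_mul]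
    rw [Finsupp.sum_of_support_subset _ (Finset.subset_union_left (s₂ := f.support)) _ (by simp),
      Finsupp.sum_of_support_subset f (Finset.subset_union_right (s₁ := (xiWord p x).support)) _
        (by simp)]
    exact Finset.sum_congr rfl fun u _ => mul_comm _ _
  rw [h1]
  exact (linear_eq_on_support ((Finsupp.lapply x).comp (xiL p)) (dotf (xiWord p x)) f
      fun y _ => by simp [xiL_single, dotf_single, xiWord_symm p x y]).symm

/-! ### Good words -/

theorem good_functional (p : Fin r → Fin r → ℤ) (g : Word r) (hg : IsGood p g) :
    ∃ φ : FA r →ₗ[K] K, φ (xiWord p g) ≠ 0 ∧ ∀ x, g < x → φ (xiWord p x) = 0 := by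
  obtain ⟨u, hu, _, hmax, hle⟩ := hg
  obtain ⟨f, rfl⟩ := (inU_iff' p u).mp hu
  refine ⟨dotf f, ?_, ?_⟩
  · rw [dotf_xi]; exact hmax
  · intro x hx
    rw [dotf_xi]
    by_contra h0
    rcases hle x (Finsupp.mem_support_iff.mpr h0) with h | h
    · exact lt_asymm hx h
    · exact hx.ne' h

theorem deg_eq_of_perm {w x : Word r} (h : w.Perm x) : deg w = deg x := by
  funext i
  exact h.count_eq i

theorem not_good_mem (p : Fin r → Fin r → ℤ) (w : Word r) (hw : ¬ IsGood p w) :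
    xiWord p w ∈ Submodule.span K (xiWord p '' {x | x.Perm w ∧ w < x}) := by
  by_contra hmem
  apply hw
  obtain ⟨φ, hφ, hle⟩ := Submodule.exists_le_ker_of_notMem hmem
  set f : FA r := ∑ y ∈ w.permutations.toFinset, φ (Finsupp.single y 1) • Finsupp.single y 1
    with hf
  have hfy : ∀ y, y.Perm w → f y = φ (Finsupp.single y 1) := by
    intro y hy
    rw [hf, Finsupp.finsetSum_apply, Finset.sum_eq_single y]
    · simp
    · intro b _ hb
      simp [Finsupp.single_apply, hb]
    · intro h
      exact absurd (by simpa using hy) h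
  have hval : ∀ x, x.Perm w → xiL p f x = φ (xiWord p x) := by
    intro x hx
    rw [← dotf_xi]
    refine linear_eq_on_support _ _ _ fun u hu => ?_
    rw [dotf_single, hfy u ((xiWord_perm p x u (Finsupp.mem_support_iff.mp hu)).trans hx)]
  have hperm : ∀ x, xiL p f x ≠ 0 → x.Perm w := by
    intro x hx
    rw [hf, map_sum, Finsupp.finsetSum_apply] at hx
    obtain ⟨y, hy, hne⟩ := Finset.exists_ne_zero_of_sum_ne_zero hx
    rw [map_smul, xiL_single, Finsupp.smul_apply] at hne
    exact (xiWord_perm p y x (right_ne_zero_of_smul hne)).trans (by simpa using hy)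
  refine ⟨xiL p f, (inU_iff' p _).mpr ⟨f, rfl⟩, ⟨deg w, ?_⟩, ?_, ?_⟩
  · intro x hx
    exact deg_eq_of_perm (hperm x (Finsupp.mem_support_iff.mp hx))
  · rw [hval w (List.Perm.refl w)]
    exact hφ
  · intro x hx
    have hx0 := Finsupp.mem_support_iff.mp hx
    have hxp := hperm x hx0
    rcases lt_trichotomy x w with h | h | h
    · exact Or.inl h
    · exact Or.inr h
    · exfalso
      apply hx0
      rw [hval x hxp]
      exact hle (Submodule.subset_span ⟨x, ⟨hxp, h⟩, rfl⟩)

/-! ### Lyndon words -/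

theorem wlt_iff {w x : Word r} : wlt w x ↔ w < x := Iff.rfl

theorem wle_iff {w x : Word r} : wle w x ↔ w ≤ x := by
  rw [wle, wlt_iff, le_iff_lt_or_eq]

theorem app_left_lt (u : Word r) {v w : Word r} (h : v < w) : u ++ v < u ++ w := by
  induction u with
  | nil => exact h
  | cons a u ih => exact List.Lex.cons ih

theorem lt_app {u : Word r} (v : Word r) (hv : v ≠ []) : u < u ++ v := by
  induction u with
  | nil =>
    cases v with
    | nil => exact absurd rfl hv
    | cons a v => exact List.Lex.nil
  | cons a u ih => exact List.Lex.cons ih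

/-- Either `u` is a prefix of `v`, or `u < v` survives appending. -/
theorem lt_cases {u v : Word r} (h : u < v) :
    (∃ t, v = u ++ t ∧ t ≠ []) ∨ ∀ s t : Word r, u ++ s < v ++ t := by
  have h' : List.Lex (· < ·) u v := h
  induction h' with
  | @nil a as => exact Or.inl ⟨a :: as, rfl, by simp⟩
  | @cons a as bs _ ih =>
    rename_i hh
    rcases ih hh with ⟨t, rfl, ht⟩ | h2
    · exact Or.inl ⟨t, rfl, ht⟩
    · exact Or.inr fun s t => List.Lex.cons (h2 s t)
  | @rel a as b bs hab => exact Or.inr fun s t => List.Lex.rel hab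

theorem lt_app_of_len {u v : Word r} (h : u < v) (hl : v.length ≤ u.length) (s t : Word r) :
    u ++ s < v ++ t := by
  rcases lt_cases h with ⟨t', rfl, ht'⟩ | h2
  · exfalso
    have := List.length_pos_iff.mpr ht'
    simp at hl
    exact ht' hl
  · exact h2 s t

theorem lyndon_letter (a : Fin r) : IsLyndon [a] := by
  refine ⟨by simp, ?_⟩
  intro u v h hu hv
  exfalso
  have := congrArg List.length h
  have h1 := List.length_pos_iff.mpr hu
  have h2 := List.length_pos_iff.mpr hv
  simp at this
  omega

theorem lyndon_append {a b : Word r} (ha : IsLyndon a) (hb : IsLyndon b) (h : a < b) :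
    IsLyndon (a ++ b) := by
  have hab : a ++ b < b := by
    rcases lt_cases h with ⟨t, rfl, ht⟩ | h2
    · exact app_left_lt a (hb.2 a t rfl ha.1 ht)
    · simpa using h2 b []
  refine ⟨by simp [ha.1], ?_⟩
  intro u v huv hu hv
  rw [wlt_iff]
  rcases List.append_eq_append_iff.mp huv with ⟨c, hc1, hc2⟩ | ⟨c, hc1, hc2⟩
  · -- u = a ++ c, b = c ++ v
    rcases eq_or_ne c [] with h0 | h0
    · subst h0
      simp at hc2
      rw [← hc2]; exact hab
    · exact hab.trans (hb.2 c v hc2 h0 hv)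
  · -- a = u ++ c, v = c ++ b
    rcases eq_or_ne c [] with h0 | h0
    · subst h0
      simp at hc2
      rw [hc2]; exact hab
    · rw [hc2]
      exact lt_app_of_len (ha.2 u c hc1 hu h0) (by rw [hc1]; simp) b b

theorem costd_spec {l : Word r} (hl : IsLyndon l) (h2 : 1 < l.length) :
    0 < costdLen l ∧ costdLen l < l.length ∧ IsLyndon (l.take (costdLen l)) ∧
    ∀ k, costdLen l < k → k < l.length → ¬ IsLyndon (l.take k) := by
  classical
  have h1 : 0 < 1 ∧ 1 < l.length ∧ IsLyndon (l.take 1) := by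
    refine ⟨one_pos, h2, ?_⟩
    rcases l with _ | ⟨a, l⟩
    · simp at h2
    · simpa using lyndon_letter a
  have hs : 0 < costdLen l ∧ costdLen l < l.length ∧ IsLyndon (l.take (costdLen l)) := by
    unfold costdLen
    exact Nat.findGreatest_spec
      (P := fun k => 0 < k ∧ k < l.length ∧ IsLyndon (l.take k)) (m := 1) (by omega) h1
  refine ⟨hs.1, hs.2.1, hs.2.2, ?_⟩
  intro k hk hkl hly
  unfold costdLen at hk
  exact Nat.findGreatest_is_greatest hk (by omega) ⟨by omega, hkl, hly⟩

theorem drop_lyndon (Lf : Word r → List (Word r))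
    (hLf : ∀ w : Word r, (∀ l ∈ Lf w, IsLyndon l) ∧
      List.IsChain (fun a b => wle b a) (Lf w) ∧ (Lf w).flatten = w)
    {l : Word r} (hl : IsLyndon l) (h2 : 1 < l.length) :
    IsLyndon (l.drop (costdLen l)) := by
  obtain ⟨h0, hlt, hly, hmax⟩ := costd_spec hl h2
  set k := costdLen l
  have hsplit : l = l.take k ++ l.drop k := (List.take_append_drop k l).symm
  set l1 := l.take k with hl1
  set l2 := l.drop k with hl2
  have hl1len : l1.length = k := by rw [hl1, List.length_take]; omega
  have hl2ne : l2 ≠ [] := by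
    intro h
    have := congrArg List.length hsplit
    rw [h, List.append_nil] at this
    omega
  obtain ⟨hL, hc, hfl⟩ := hLf l2
  rcases hLs : Lf l2 with _ | ⟨m, ms⟩
  · rw [hLs] at hfl; exact absurd hfl.symm hl2ne
  rw [hLs] at hL hc hfl
  rcases List.eq_nil_or_concat ms with rfl | ⟨ms', z, rfl⟩
  · simp at hfl
    rw [← hfl]; exact hL m (by simp)
  exfalso
  simp only [List.concat_eq_append] at *
  have hmL : IsLyndon m := hL m (by simp)
  have hzL : IsLyndon z := hL z (by simp)
  have hfl' : l2 = m ++ (ms'.flatten ++ z) := by rw [← hfl]; simp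
  have hzpos := List.length_pos_iff.mpr hzL.1
  have hmpos := List.length_pos_iff.mpr hmL.1
  have hzm : z ≤ m := by
    have htr : IsTrans (Word r) (fun a b => wle b a) :=
      ⟨fun a b c hab hbc => by rw [wle_iff] at *; exact hbc.trans hab⟩
    have hpw := List.isChain_iff_pairwise.mp hc
    exact wle_iff.mp ((List.pairwise_cons.mp hpw).1 z (by simp))
  have hml : ¬ l1 < m := by
    intro hlm
    have hA := lyndon_append hly hmL hlm
    have htake : l.take (k + m.length) = l1 ++ m := by
      have : l = (l1 ++ m) ++ (ms'.flatten ++ z) := by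
        rw [List.append_assoc, ← hfl']; exact hsplit
      rw [this, List.take_append_of_le_length (by simp [hl1len])]
      rw [← hl1len, ← List.length_append, List.take_length]
    refine hmax (k + m.length) (by omega) ?_ (htake ▸ hA)
    have := congrArg List.length hsplit
    rw [hfl'] at this
    simp only [List.length_append] at this
    omega
  have hz : l < z := by
    refine hl.2 (l1 ++ (m ++ ms'.flatten)) z ?_ (by simp [hly.1]) hzL.1
    conv_lhs => rw [hsplit, hfl']
    simp
  have hl1l : l1 < l := by
    conv_rhs => rw [hsplit]
    exact lt_app l2 hl2ne
  exact absurd (hl1l.trans hz) (not_lt.mpr (hzm.trans (not_lt.mp hml)))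

/-! ### Triangularity of brackets -/

/-- Combinations of rearrangements of `w` larger than `w`. -/
def NN (w : Word r) : Submodule K (FA r) := Finsupp.supported K K {x | x.Perm w ∧ w < x}

/-- Combinations of rearrangements of `w` at least `w`. -/
def MM (w : Word r) : Submodule K (FA r) := Finsupp.supported K K {x | x.Perm w ∧ w ≤ x}

/-- Bilinear concatenation. -/
def cmL : FA r →ₗ[K] FA r →ₗ[K] FA r :=
  Finsupp.linearCombination K
    (fun w => Finsupp.linearCombination K (fun x => Finsupp.single (w ++ x) (1 : K)))

theorem cmul_eq (f g : FA r) : cmul f g = cmL f g := by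
  simp only [cmul, cmL, Finsupp.linearCombination_apply, Finsupp.sum,
    LinearMap.sum_apply, LinearMap.smul_apply, Finset.smul_sum, smul_smul,
    Finsupp.smul_single, smul_eq_mul, mul_one]

theorem cmL_single (w x : Word r) :
    cmL (Finsupp.single w 1) (Finsupp.single x 1) = Finsupp.single (w ++ x) 1 := by
  simp [cmL]

theorem cmL_mem {s t u : Set (Word r)} {f g : FA r} (hf : f ∈ Finsupp.supported K K s)
    (hg : g ∈ Finsupp.supported K K t) (h : ∀ x ∈ s, ∀ y ∈ t, x ++ y ∈ u) :
    cmL f g ∈ Finsupp.supported K K u := by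
  rw [← cmul_eq]
  unfold cmul
  refine Submodule.sum_mem _ fun x hx => Submodule.sum_mem _ fun y hy => ?_
  exact Finsupp.single_mem_supported _ _
    (h x ((Finsupp.mem_supported K _).mp hf hx) y ((Finsupp.mem_supported K _).mp hg hy))

theorem MM_of_NN {w : Word r} {f : FA r} (h : f - Finsupp.single w 1 ∈ NN w) : f ∈ MM w := by
  have h1 : f - Finsupp.single w 1 ∈ MM w :=
    Finsupp.supported_mono (s := {x : Word r | x.Perm w ∧ w < x})
      (t := {x : Word r | x.Perm w ∧ w ≤ x})
      (fun x hx => ⟨hx.1, le_of_lt hx.2⟩) h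
  have h2 : Finsupp.single w (1 : K) ∈ MM w :=
    Finsupp.single_mem_supported _ _ ⟨List.Perm.refl w, le_refl w⟩
  simpa using Submodule.add_mem _ h1 h2

theorem cmul_tri {w x : Word r} {f g : FA r} (hf : f - Finsupp.single w 1 ∈ NN w)
    (hg : g - Finsupp.single x 1 ∈ NN x) :
    cmul f g - Finsupp.single (w ++ x) 1 ∈ NN (w ++ x) := by
  rw [cmul_eq]
  have e : cmL f g - Finsupp.single (w ++ x) 1 =
      cmL (f - Finsupp.single w 1) g + cmL (Finsupp.single w 1) (g - Finsupp.single x 1) := by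
    rw [map_sub, map_sub, LinearMap.sub_apply, cmL_single]
    abel
  rw [e]
  refine Submodule.add_mem _ ?_ ?_
  · refine cmL_mem hf (MM_of_NN hg) ?_
    rintro u ⟨hu, hu2⟩ v ⟨hv, hv2⟩
    exact ⟨hu.append hv, lt_app_of_len hu2 (by rw [hu.length_eq]) _ _⟩
  · have hw : Finsupp.single w (1 : K) ∈ Finsupp.supported K K {w} :=
      Finsupp.single_mem_supported _ _ rfl
    refine cmL_mem hw hg ?_
    rintro u rfl v ⟨hv, hv2⟩
    exact ⟨hv.append_left _, app_left_lt _ hv2⟩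

theorem bracket_tri (p : Fin r → Fin r → ℤ) (Lf : Word r → List (Word r))
    (hLf : ∀ w : Word r, (∀ l ∈ Lf w, IsLyndon l) ∧
      List.IsChain (fun a b => wle b a) (Lf w) ∧ (Lf w).flatten = w) :
    ∀ (n : ℕ) (l : Word r), l.length = n → IsLyndon l →
      bracket p l - Finsupp.single l 1 ∈ NN l := by
  intro n
  induction n using Nat.strong_induction_on with
  | _ n ih =>
  intro l hn hl
  rw [bracket]
  split_ifs with h1 hk
  · simp
  · have h2 : 1 < l.length := by omega
    obtain ⟨_, _, hly, _⟩ := costd_spec hl h2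
    have hd := drop_lyndon Lf hLf hl h2
    set k := costdLen l
    have i1 := ih (l.take k).length (by rw [List.length_take]; omega) _ rfl hly
    have i2 := ih (l.drop k).length (by rw [List.length_drop]; omega) _ rfl hd
    have c1 := cmul_tri i1 i2
    have c2 := MM_of_NN (cmul_tri i2 i1)
    rw [List.take_append_drop] at c1
    rw [sub_right_comm]
    refine Submodule.sub_mem _ c1 (Submodule.smul_mem _ _ ?_)
    refine Finsupp.supported_mono ?_ c2
    rintro x ⟨hx1, hx2⟩
    refine ⟨hx1.trans (List.perm_append_comm.trans
      (by rw [List.take_append_drop])), lt_of_lt_of_le ?_ hx2⟩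
    exact lt_trans (hl.2 _ _ (List.take_append_drop k l).symm hly.1 hd.1) (lt_app _ hly.1)
  · simp

theorem cprod_tri (p : Fin r → Fin r → ℤ) (Lf : Word r → List (Word r))
    (hLf : ∀ w : Word r, (∀ l ∈ Lf w, IsLyndon l) ∧
      List.IsChain (fun a b => wle b a) (Lf w) ∧ (Lf w).flatten = w) :
    ∀ ls : List (Word r), (∀ l ∈ ls, IsLyndon l) →
      cprod p ls - Finsupp.single ls.flatten 1 ∈ NN ls.flatten := by
  intro ls
  induction ls with
  | nil => intro _; simp [cprod]
  | cons l ls ih =>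
    intro h
    exact cmul_tri (bracket_tri p Lf hLf _ l rfl (h l (by simp)))
      (ih fun m hm => h m (by simp [hm]))

theorem xiL_NN (p : Fin r → Fin r → ℤ) {w : Word r} {f : FA r} (hf : f ∈ NN w) :
    xiL p f ∈ Submodule.span K (xiWord p '' {x | x.Perm w ∧ w < x}) := by
  unfold xiL
  rw [Finsupp.linearCombination_apply]
  refine Submodule.sum_mem _ fun x hx => Submodule.smul_mem _ _ (Submodule.subset_span ?_)
  exact ⟨x, (Finsupp.mem_supported K _).mp hf hx, rfl⟩

theorem basis_aux (p : Fin r → Fin r → ℤ) (Rg : Word r → FA r)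
    (hR : ∀ w, Rg w - xiWord p w ∈ Submodule.span K (xiWord p '' {x | x.Perm w ∧ w < x})) :
    LinearIndependent K (fun g : {g : Word r // IsGood p g} => Rg g.1) ∧
    ∀ f : FA r, InU p f ↔
      f ∈ Submodule.span K (Set.range fun g : {g : Word r // IsGood p g} => Rg g.1) := by
  constructor
  · have hφ : ∀ (g : Word r), IsGood p g → ∃ φ : FA r →ₗ[K] K, φ (Rg g) ≠ 0 ∧
        ∀ x, g < x → φ (Rg x) = 0 := by
      intro g hg
      obtain ⟨φ, h1, h2⟩ := good_functional p g hg
      have h3 : ∀ x, g ≤ x → φ (Rg x) = φ (xiWord p x) := by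
        intro x hx
        have : Submodule.span K (xiWord p '' {y | y.Perm x ∧ x < y}) ≤ LinearMap.ker φ := by
          rw [Submodule.span_le]
          rintro _ ⟨y, ⟨_, hy⟩, rfl⟩
          exact h2 y (lt_of_le_of_lt hx hy)
        have := this (hR x)
        rw [LinearMap.mem_ker, map_sub, sub_eq_zero] at this
        exact this
      refine ⟨φ, by rw [h3 g le_rfl]; exact h1, ?_⟩
      intro x hx
      rw [h3 x hx.le, h2 x hx]
    classical
    rw [linearIndependent_iff']
    intro s c hsum
    by_contra hcon
    push Not at hcon
    obtain ⟨i, his, hi⟩ := hcon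
    have hne : (s.filter fun g => c g ≠ 0).Nonempty := ⟨i, by simp [his, hi]⟩
    obtain ⟨g, hg, hmin⟩ := Finset.exists_min_image _ (fun g => g.1) hne
    rw [Finset.mem_filter] at hg
    obtain ⟨φ, h1, h2⟩ := hφ g.1 g.2
    have h4 := congrArg φ hsum
    rw [map_sum, map_zero, Finset.sum_eq_single g] at h4
    · rw [map_smul] at h4
      rcases smul_eq_zero.mp h4 with h | h
      · exact hg.2 h
      · exact h1 h
    · intro b hb hbg
      rw [map_smul]
      by_cases hcb : c b = 0
      · rw [hcb, zero_smul]
      · have hle := hmin b (by simp [hb, hcb])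
        rw [h2 b.1 (lt_of_le_of_ne hle fun e => hbg (Subtype.ext e.symm)), smul_zero]
    · intro h; exact absurd hg.1 h
  · set S := Submodule.span K (Set.range fun g : {g : Word r // IsGood p g} => Rg g.1) with hS
    have hxi : ∀ w, xiWord p w ∈ S := by
      have key : ∀ (n : ℕ) (w : Word r),
          (w.permutations.toFinset.filter fun x => w < x).card = n → xiWord p w ∈ S := by
        intro n
        induction n using Nat.strong_induction_on with
        | _ n ih =>
        intro w hn
        have hsub : Submodule.span K (xiWord p '' {x | x.Perm w ∧ w < x}) ≤ S := by
          rw [Submodule.span_le]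
          rintro _ ⟨x, ⟨hx, hwx⟩, rfl⟩
          refine ih _ ?_ x rfl
          rw [← hn]
          apply Finset.card_lt_card
          rw [Finset.ssubset_iff_of_subset]
          · exact ⟨x, by simp [hx, hwx], by simp⟩
          · intro y hy
            simp only [Finset.mem_filter, List.mem_toFinset, List.mem_permutations] at hy ⊢
            exact ⟨hy.1.trans hx, hwx.trans hy.2⟩
        by_cases hg : IsGood p w
        · have h1 := hsub (hR w)
          have h2 : Rg w ∈ S := Submodule.subset_span ⟨⟨w, hg⟩, rfl⟩
          simpa using Submodule.sub_mem _ h2 h1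
        · exact hsub (not_good_mem p w hg)
      exact fun w => key _ w rfl
    have hRU : ∀ w, Rg w ∈ Submodule.span K (Set.range (xiWord p)) := by
      intro w
      have h1 : Rg w - xiWord p w ∈ Submodule.span K (Set.range (xiWord p)) :=
        Submodule.span_mono (Set.image_subset_range _ _) (hR w)
      simpa using Submodule.add_mem _ h1 (Submodule.subset_span ⟨w, rfl⟩)
    intro f
    rw [inU_iff]
    constructor
    · intro h
      refine Submodule.span_le.mpr ?_ h
      rintro _ ⟨w, rfl⟩
      exact hxi w
    · intro h
      refine Submodule.span_le.mpr ?_ h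
      rintro _ ⟨g, rfl⟩
      exact hRU g.1

end Helpers

/-- Proposition 4.4 (Rosso): the Lyndon basis `(r_g)_{g good}`, where `r_g = Ξ([g])`
and `[g] = [l₁]⋯[l_k]` for the canonical nonincreasing Lyndon factorization `g = l₁⋯l_k`,
is a `ℚ(q)`-basis of `𝒰`. -/
theorem lyndon_basis_of_U {r : ℕ} (hr : 1 ≤ r) (C : CartanData r)
    (Lf : Word r → List (Word r))
    (hLf : ∀ w : Word r, (∀ l ∈ Lf w, IsLyndon l) ∧
      List.Chain' (fun a b => wle b a) (Lf w) ∧ (Lf w).flatten = w) :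
    LinearIndependent K
      (fun g : {g : Word r // IsGood C.p g} => xi C.p (cprod C.p (Lf g.1))) ∧
    ∀ f : FA r, InU C.p f ↔
      f ∈ Submodule.span K
        (Set.range fun g : {g : Word r // IsGood C.p g} => xi C.p (cprod C.p (Lf g.1))) := by
  refine basis_aux C.p (fun w => xi C.p (cprod C.p (Lf w))) ?_
  intro w
  have h := cprod_tri C.p Lf hLf (Lf w) (hLf w).1
  rw [(hLf w).2.2] at h
  have h2 := xiL_NN C.p h
  rwa [map_sub, xiL_single, ← xi_eq] at h2
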